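/- arXiv:2206.02154 — 4 statements merged into one kernel-verified Lean document; each statement's English description precedes it below -/
import Mathlib

section
/- If f and g both belong to the space C_{-1}(0,∞), then their Laplace convolution f * g also belongs to C_{-1}(0,∞). In particular, for any kernel κ ∈ C_{-1}(0,∞), the general fractional integral I_{(κ)} maps the space C_{-1}(0,∞) into itself. -/
open Real Filter MeasureTheory intervalIntegral

/-- The Laplace convolution `(f * g)(t) = ∫_0^t f(t-τ) g(τ) dτ`. -/
noncomputable def lconv (f g : ℝ → ℝ) : ℝ → ℝ :=
  fun t => ∫ τ in (0:ℝ)..t, f (t - τ) * g τ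

/-- The space `C_{-1}(0,∞)`: functions representable as `t^p f₁(t)` with `p > -1`
and `f₁` continuous on `[0,∞)`. -/
def CMinusOne (f : ℝ → ℝ) : Prop :=
  ∃ p : ℝ, p > -1 ∧ ∃ f₁ : ℝ → ℝ, ContinuousOn f₁ (Set.Ici 0) ∧
    ∀ t > (0:ℝ), f t = t ^ p * f₁ t

lemma beta_int (p q : ℝ) (hp : p > -1) (hq : q > -1) :
    IntervalIntegrable (fun s : ℝ => (1 - s) ^ p * s ^ q) volume 0 1 := by
  have h := (Complex.betaIntegral_convergent (u := ((q + 1 : ℝ) : ℂ)) (v := ((p + 1 : ℝ) : ℂ))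
    (by rw [Complex.ofReal_re]; linarith) (by rw [Complex.ofReal_re]; linarith)).norm
  rw [intervalIntegrable_iff_integrableOn_Ioo_of_le zero_le_one] at h ⊢
  refine h.congr_fun ?_ measurableSet_Ioo
  intro s hs
  have h1 : 0 < 1 - s := by linarith [hs.2]
  have e1 : ((q + 1 : ℝ) : ℂ) - 1 = ((q : ℝ) : ℂ) := by push_cast; ring
  have e2 : ((p + 1 : ℝ) : ℂ) - 1 = ((p : ℝ) : ℂ) := by push_cast; ring
  have e3 : (1 : ℂ) - (s : ℂ) = ((1 - s : ℝ) : ℂ) := by push_cast; ring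
  simp only [e1, e2, e3, norm_mul]
  rw [Complex.norm_cpow_eq_rpow_re_of_pos hs.1, Complex.norm_cpow_eq_rpow_re_of_pos h1,
    Complex.ofReal_re, Complex.ofReal_re, mul_comm]

lemma cont_aux (p q : ℝ) (hp : p > -1) (hq : q > -1) (F G : ℝ → ℝ) (hF : Continuous F)
    (hG : Continuous G) :
    Continuous (fun t : ℝ => ∫ s in (0:ℝ)..1, ((1 - s) ^ p * s ^ q) *
      (F (t * (1 - s)) * G (t * s))) := by
  rw [continuous_iff_continuousAt]
  intro t₀
  have hI := beta_int p q hp hq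
  obtain ⟨M, hM⟩ := ((isCompact_Icc (a := t₀ - 1) (b := t₀ + 1)).prod
    (isCompact_Icc (a := (0:ℝ)) (b := 1))).exists_bound_of_continuousOn
    (f := fun z : ℝ × ℝ => F (z.1 * (1 - z.2)) * G (z.1 * z.2))
    (by fun_prop)
  refine intervalIntegral.continuousAt_of_dominated_interval
    (bound := fun s => ‖(1 - s) ^ p * s ^ q‖ * M) ?_ ?_ ?_ ?_
  · refine Eventually.of_forall fun t => ?_
    refine hI.def'.aestronglyMeasurable.mul ?_
    exact Continuous.aestronglyMeasurable (by fun_prop)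
  · filter_upwards [Icc_mem_nhds (show t₀ - 1 < t₀ by linarith) (show t₀ < t₀ + 1 by linarith)]
      with t ht
    refine Eventually.of_forall fun s hs => ?_
    rw [Set.uIoc_of_le zero_le_one] at hs
    rw [norm_mul]
    exact mul_le_mul_of_nonneg_left (hM (t, s) ⟨ht, hs.1.le, hs.2⟩) (norm_nonneg _)
  · exact hI.norm.mul_const M
  · refine Eventually.of_forall fun s _ => ?_
    exact Continuous.continuousAt (by fun_prop)

/-- If `f, g ∈ C_{-1}(0,∞)`, then their Laplace convolution `f * g` also belongs to
`C_{-1}(0,∞)`; in particular, for any kernel `κ ∈ C_{-1}(0,∞)` the GFI `I_{(κ)}`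
maps `C_{-1}(0,∞)` into itself. -/
theorem lconv_mem_CMinusOne (f g : ℝ → ℝ) (hf : CMinusOne f) (hg : CMinusOne g) :
    CMinusOne (lconv f g) := by
  obtain ⟨p, hp, f₁, hf₁, hf⟩ := hf
  obtain ⟨q, hq, g₁, hg₁, hg⟩ := hg
  have hF : Continuous (fun x : ℝ => f₁ (max x 0)) :=
    hf₁.comp_continuous (by fun_prop) (fun x => Set.mem_Ici.2 (le_max_right _ _))
  have hG : Continuous (fun x : ℝ => g₁ (max x 0)) :=
    hg₁.comp_continuous (by fun_prop) (fun x => Set.mem_Ici.2 (le_max_right _ _))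
  refine ⟨p + q + 1, by linarith, _, (cont_aux p q hp hq _ _ hF hG).continuousOn, ?_⟩
  intro t ht
  have key := intervalIntegral.mul_integral_comp_mul_left (a := 0) (b := 1)
    (f := fun τ => f (t - τ) * g τ) t
  rw [mul_zero, mul_one] at key
  unfold lconv
  rw [← key, Real.rpow_add ht, Real.rpow_one, mul_comm _ t, mul_assoc,
    ← intervalIntegral.integral_const_mul (t ^ (p + q))]
  congr 1
  rw [intervalIntegral.integral_of_le zero_le_one, intervalIntegral.integral_of_le zero_le_one,
    integral_Ioc_eq_integral_Ioo, integral_Ioc_eq_integral_Ioo]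
  refine setIntegral_congr_fun measurableSet_Ioo fun s hs => ?_
  have h1 : 0 < 1 - s := by linarith [hs.2]
  have h2 : 0 < t * (1 - s) := mul_pos ht h1
  have h3 : 0 < t * s := mul_pos ht hs.1
  have h4 : t - t * s = t * (1 - s) := by ring
  simp only [h4]
  rw [hf _ h2, hg _ h3, max_eq_left h2.le, max_eq_left h3.le, Real.mul_rpow ht.le h1.le,
    Real.mul_rpow ht.le hs.1.le, Real.rpow_add ht]
  ring
end

section
/- The ring (C_{-1}(0,∞), +, *) with the usual addition and multiplication given by the Laplace convolution has no divisors of zero: if f, g ∈ C_{-1}(0,∞) and (f * g)(t) = 0 for all t > 0, then f(t) = 0 for all t > 0 or g(t) = 0 for all t > 0. -/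
open Real Filter MeasureTheory intervalIntegral

/-- truncation to `(0,T]` -/
noncomputable def trT (T : ℝ) (f : ℝ → ℝ) : ℝ → ℝ := Set.indicator (Set.Ioc 0 T) f

/-- full-line convolution -/
noncomputable def cvR (f g : ℝ → ℝ) : ℝ → ℝ := fun t => ∫ τ, f (t - τ) * g τ

/-- locally integrable up to zero -/
def LocI (f : ℝ → ℝ) : Prop := ∀ T : ℝ, IntegrableOn f (Set.Ioc 0 T)

/-- locally bounded up to zero -/
def LocB (f : ℝ → ℝ) : Prop := ∀ T : ℝ, ∃ C : ℝ, ∀ t ∈ Set.Ioc 0 T, |f t| ≤ C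

lemma cvR_eq_conv (f g : ℝ → ℝ) : cvR f g = convolution g f (ContinuousLinearMap.mul ℝ ℝ) volume := by
  funext t
  simp only [cvR, convolution_def, ContinuousLinearMap.mul_apply']
  congr 1; funext τ; ring

lemma lconv_congr {f f' g g' : ℝ → ℝ} (hf : ∀ t > 0, f t = f' t) (hg : ∀ t > 0, g t = g' t)
    (t : ℝ) (ht : 0 ≤ t) : lconv f g t = lconv f' g' t := by
  simp only [lconv, intervalIntegral.integral_of_le ht, integral_Ioc_eq_integral_Ioo]
  refine setIntegral_congr_fun measurableSet_Ioo ?_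
  intro τ hτ
  simp only
  rw [hf _ (by linarith [hτ.2]), hg _ hτ.1]

lemma lconv_comm (f g : ℝ → ℝ) (t : ℝ) : lconv f g t = lconv g f t := by
  have := intervalIntegral.integral_comp_sub_left (a := 0) (b := t) (fun τ => g (t - τ) * f τ) t
  simp only [sub_zero, sub_self, sub_sub_cancel] at this
  simp only [lconv]
  rw [← this]
  congr 1; funext τ; ring

lemma lconv_eq_cvR {f g F G : ℝ → ℝ} {t : ℝ} (ht : 0 ≤ t)
    (hF : ∀ s, 0 < s → s < t → F s = f s) (hG : ∀ s, 0 < s → s < t → G s = g s)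
    (hF0 : ∀ s ≤ 0, F s = 0) (hG0 : ∀ s ≤ 0, G s = 0) : lconv f g t = cvR F G t := by
  simp only [lconv, cvR, intervalIntegral.integral_of_le ht, integral_Ioc_eq_integral_Ioo]
  rw [← MeasureTheory.integral_indicator measurableSet_Ioo]
  congr 1; funext τ
  by_cases h : τ ∈ Set.Ioo 0 t
  · rw [Set.indicator_of_mem h, hF _ (by linarith [h.2]) (by linarith [h.1]), hG _ h.1 h.2]
  · rw [Set.indicator_of_notMem h]
    by_cases h1 : τ ≤ 0
    · rw [hG0 _ h1, mul_zero]
    · rw [hF0 _ (by by_contra h2; exact h ⟨by linarith, by linarith⟩), zero_mul]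

lemma trT_eq {T : ℝ} {f : ℝ → ℝ} {s : ℝ} (h : 0 < s) (h' : s ≤ T) : trT T f s = f s :=
  Set.indicator_of_mem (show s ∈ Set.Ioc 0 T from ⟨h, h'⟩) _

lemma trT_zero {T : ℝ} {f : ℝ → ℝ} {s : ℝ} (h : s ≤ 0) : trT T f s = 0 :=
  Set.indicator_of_notMem (fun h' => absurd h'.1 (not_lt.2 h)) _

lemma lconv_eq_tr (f g : ℝ → ℝ) {t T : ℝ} (ht : 0 ≤ t) (hT : t ≤ T) :
    lconv f g t = cvR (trT T f) (trT T g) t :=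
  lconv_eq_cvR ht (fun _ h h' => trT_eq h (by linarith)) (fun _ h h' => trT_eq h (by linarith))
    (fun _ h => trT_zero h) (fun _ h => trT_zero h)

lemma cvR_zero {F G : ℝ → ℝ} 
    (hF0 : ∀ s ≤ 0, F s = 0) (hG0 : ∀ s ≤ 0, G s = 0) (t : ℝ) (ht : t ≤ 0) : cvR F G t = 0 := by
  simp only [cvR]
  rw [← integral_zero ℝ ℝ (μ := volume)]
  congr 1; funext τ
  by_cases h1 : τ ≤ 0
  · rw [hG0 _ h1, mul_zero]
  · rw [hF0 _ (by linarith), zero_mul]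

lemma trT_int {f : ℝ → ℝ} (hf : LocI f) (T : ℝ) : Integrable (trT T f) :=
  (integrable_indicator_iff measurableSet_Ioc).2 (hf T)

lemma trT_bdd {f : ℝ → ℝ} (hf : LocB f) (T : ℝ) : ∃ C, ∀ t, |trT T f t| ≤ C := by
  obtain ⟨C, hC⟩ := hf T
  refine ⟨max C 0, fun t => ?_⟩
  by_cases h : t ∈ Set.Ioc 0 T
  · rw [trT, Set.indicator_of_mem h]; exact (hC t h).trans (le_max_left _ _)
  · rw [trT, Set.indicator_of_notMem h]; simp

lemma cvR_assoc {K F G : ℝ → ℝ} (hK : Integrable K) (hF : Integrable F) (hG : Integrable G)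
    {C : ℝ} (hC : ∀ t, |K t| ≤ C) (t : ℝ) : cvR (cvR K F) G t = cvR K (cvR F G) t := by
  simp only [cvR_eq_conv]
  symm
  have hI : Integrable (convolution (fun x => ‖F x‖) (fun x => ‖K x‖) (ContinuousLinearMap.mul ℝ ℝ) volume) :=
    hF.norm.integrable_convolution _ hK.norm
  refine convolution_assoc _ _ _ _ ?_ hG.1 hF.1 hK.1 (hG.ae_convolution_exists _ hF)
    (hF.norm.ae_convolution_exists _ hK.norm) ?_
  · intro x y z; simp [mul_assoc]
  · have hm := (hI.comp_sub_left t).1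
    refine Integrable.mul_bdd (c := C * ∫ x, ‖F x‖) hG.norm hm ?_
    refine Eventually.of_forall fun s => ?_
    rw [convolution_def, mul_comm, ← MeasureTheory.integral_mul_const]
    refine norm_integral_le_of_norm_le (hF.norm.mul_const C) ?_
    refine Eventually.of_forall fun u => ?_
    simp only [ContinuousLinearMap.mul_apply', norm_mul, norm_norm]
    exact mul_le_mul_of_nonneg_left (hC _) (norm_nonneg _)

lemma lconv_assoc {k f g : ℝ → ℝ} (hkI : LocI k) (hkB : LocB k) (hf : LocI f) (hg : LocI g)
    (t : ℝ) (ht : 0 ≤ t) : lconv (lconv k f) g t = lconv k (lconv f g) t := by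
  obtain ⟨C, hC⟩ := trT_bdd hkB t
  have z : ∀ f : ℝ → ℝ, ∀ s ≤ 0, trT t f s = 0 := fun f s h => trT_zero h
  have e : ∀ f : ℝ → ℝ, ∀ s, 0 < s → s < t → trT t f s = f s := fun f s h h' => trT_eq h h'.le
  rw [lconv_eq_cvR (F := cvR (trT t k) (trT t f)) (G := trT t g) ht
      (fun s h h' => (lconv_eq_tr _ _ h.le h'.le).symm) (e g) (cvR_zero (z k) (z f)) (z g),
    lconv_eq_cvR (f := k) (F := trT t k) (G := cvR (trT t f) (trT t g)) ht
      (e k) (fun s h h' => (lconv_eq_tr _ _ h.le h'.le).symm) (z k) (cvR_zero (z f) (z g))]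
  exact cvR_assoc (trT_int hkI t) (trT_int hf t) (trT_int hg t) hC t

lemma LocI_cont {f : ℝ → ℝ} (hf : Continuous f) : LocI f := fun T =>
  (hf.integrableOn_Icc (a := 0) (b := T)).mono_set Set.Ioc_subset_Icc_self

lemma LocB_cont {f : ℝ → ℝ} (hf : Continuous f) : LocB f := fun T => by
  obtain ⟨C, hC⟩ := (isCompact_Icc (a := 0) (b := T)).exists_bound_of_continuousOn hf.continuousOn
  exact ⟨C, fun t ht => hC t ⟨ht.1.le, ht.2⟩⟩

lemma lconv_cont {f g : ℝ → ℝ} (hf : Continuous f) (hg : Continuous g) : Continuous (lconv f g) := by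
  unfold lconv
  exact intervalIntegral.continuous_parametric_intervalIntegral_of_continuous
    (f := fun t τ => f (t - τ) * g τ) (by fun_prop) continuous_id

lemma phragmen {F : ℝ → ℝ} (hF : Integrable F) (hF0 : ∀ s ≤ 0, F s = 0) {T B c : ℝ} (hc : c < T)
    (hB : ∀ x : ℝ, 0 ≤ x → |∫ t, rexp (x * (T - t)) * F t| ≤ B) :
    ∫ t in Set.Iic c, F t = 0 := by
  have hB0 : 0 ≤ B := (abs_nonneg _).trans (hB 0 le_rfl)
  have hint : ∀ x : ℝ, 0 ≤ x → Integrable (fun t => rexp (x * (c - t)) * F t) ∧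
      ∫ t, ‖rexp (x * (c - t)) * F t‖ ≤ rexp (x * c) * ∫ t, ‖F t‖ := by
    intro x hx
    have hb : ∀ t, ‖rexp (x * (c - t)) * F t‖ ≤ rexp (x * c) * ‖F t‖ := by
      intro t
      by_cases h : t ≤ 0
      · simp [hF0 t h]
      · rw [norm_mul, Real.norm_of_nonneg (Real.exp_pos _).le]
        gcongr
        linarith
    have h1 : Integrable (fun t => rexp (x * (c - t)) * F t) :=
      (hF.norm.const_mul (rexp (x * c))).mono'
        ((by fun_prop : Continuous fun t => rexp (x * (c - t))).aestronglyMeasurable.mul hF.1)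
        (Eventually.of_forall hb)
    refine ⟨h1, ?_⟩
    rw [← MeasureTheory.integral_const_mul]
    exact integral_mono h1.norm (hF.norm.const_mul _) hb
  have hBc : ∀ x : ℝ, 0 ≤ x → |∫ t, rexp (x * (c - t)) * F t| ≤ rexp (-(x * (T - c))) * B := by
    intro x hx
    have : ∫ t, rexp (x * (c - t)) * F t = rexp (-(x * (T - c))) * ∫ t, rexp (x * (T - t)) * F t := by
      rw [← MeasureTheory.integral_const_mul]
      congr 1; funext t
      rw [← mul_assoc, ← Real.exp_add]
      congr 2; ring
    rw [this, abs_mul, abs_of_pos (Real.exp_pos _)]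
    exact mul_le_mul_of_nonneg_left (hB x hx) (Real.exp_pos _).le
  have hexp : ∀ y : ℝ, HasSum (fun k : ℕ => y ^ k / (k.factorial : ℝ)) (rexp y) := by
    intro y
    rw [Real.exp_eq_exp_ℝ]
    exact NormedSpace.expSeries_div_hasSum_exp y
  have key : ∀ n : ℕ, |(∫ t, rexp (-rexp (n * (c - t))) * F t) - ∫ t, F t|
      ≤ (rexp (-(n * (T - c))) * B) * rexp 1 := by
    intro n
    have hs := hasSum_integral_of_summable_integral_norm (μ := volume)
      (F := fun (k : ℕ) t => (-1) ^ k / (k.factorial : ℝ) * (rexp ((k * n : ℝ) * (c - t)) * F t))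
      (fun k => (hint _ (by positivity)).1.const_mul _) ?_
    · have e1 : ∀ t, ∑' k : ℕ, (-1) ^ k / (k.factorial : ℝ) * (rexp ((k * n : ℝ) * (c - t)) * F t)
          = rexp (-rexp (n * (c - t))) * F t := by
        intro t
        refine HasSum.tsum_eq ?_
        refine HasSum.congr_fun ((hexp (-rexp (n * (c - t)))).mul_right (F t)) fun k => ?_
        rw [neg_pow (rexp _), ← Real.exp_nat_mul, ← mul_assoc (k : ℝ)]
        ring_nf
      simp only [e1] at hs
      have hs1 := (hasSum_nat_add_iff' 1).2 hs
      simp only [Finset.sum_range_one, pow_zero, Nat.factorial_zero, Nat.cast_one, div_one,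
        Nat.cast_zero, zero_mul, Real.exp_zero, one_mul] at hs1
      rw [← hs1.tsum_eq, ← Real.norm_eq_abs]
      have hsum1 : HasSum (fun k : ℕ => (rexp (-(n * (T - c))) * B) * (1 ^ k / (k.factorial : ℝ)))
          ((rexp (-(n * (T - c))) * B) * rexp 1) := (hexp 1).mul_left _
      refine tsum_of_norm_bounded hsum1 ?_
      intro k
      rw [MeasureTheory.integral_const_mul, norm_mul, norm_div, norm_pow, norm_neg, norm_one, one_pow,
        Real.norm_of_nonneg (by positivity), mul_comm]
      refine mul_le_mul ?_ ?_ (by positivity) (by positivity)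
      · refine (hBc _ (by positivity)).trans ?_
        gcongr
        push_cast
        have : (0:ℝ) ≤ k * n := by positivity
        nlinarith
      · rw [one_pow]
        gcongr
        exact Nat.le_succ k
    · refine Summable.of_nonneg_of_le (fun k => integral_nonneg fun t => norm_nonneg _) ?_
        ((hexp (rexp (n * c))).summable.mul_right (∫ t, ‖F t‖))
      intro k
      have : ∀ t, ‖(-1) ^ k / (k.factorial : ℝ) * (rexp ((k * n : ℝ) * (c - t)) * F t)‖
          = 1 / (k.factorial : ℝ) * ‖rexp ((k * n : ℝ) * (c - t)) * F t‖ := by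
        intro t
        rw [norm_mul, norm_div, norm_pow, norm_neg, norm_one, one_pow,
          Real.norm_of_nonneg (by positivity : (0:ℝ) ≤ k.factorial)]
      simp only [this]
      rw [MeasureTheory.integral_const_mul]
      refine (mul_le_mul_of_nonneg_left (hint _ (by positivity)).2 (by positivity)).trans (le_of_eq ?_)
      rw [← Real.exp_nat_mul]
      ring_nf
  -- left limits
  have hlim0 : Tendsto (fun n : ℕ => (rexp (-(n * (T - c))) * B) * rexp 1) atTop (nhds 0) := by
    have : Tendsto (fun n : ℕ => (n : ℝ) * (T - c)) atTop atTop :=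
      tendsto_natCast_atTop_atTop.atTop_mul_const (by linarith)
    simpa using ((Real.tendsto_exp_neg_atTop_nhds_zero.comp this).mul_const B).mul_const (rexp 1)
  have hlim1 : Tendsto (fun n : ℕ => ∫ t, rexp (-rexp (n * (c - t))) * F t) atTop
      (nhds (∫ t, F t)) := by
    rw [tendsto_iff_norm_sub_tendsto_zero]
    exact squeeze_zero (fun _ => norm_nonneg _) key hlim0
  have hlim2 : Tendsto (fun n : ℕ => ∫ t, rexp (-rexp (n * (c - t))) * F t) atTop
      (nhds (∫ t, Set.indicator (Set.Ioi c) F t)) := by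
    refine tendsto_integral_of_dominated_convergence (fun t => ‖F t‖) ?_ hF.norm ?_ ?_
    · intro n
      exact (by fun_prop : Continuous fun t => rexp (-rexp (n * (c - t)))).aestronglyMeasurable.mul hF.1
    · intro n
      refine Eventually.of_forall fun t => ?_
      rw [norm_mul, Real.norm_of_nonneg (Real.exp_pos _).le]
      refine mul_le_of_le_one_left (norm_nonneg _) (Real.exp_le_one_iff.2 ?_)
      linarith [Real.exp_pos (n * (c - t))]
    · have hne : ∀ᵐ t : ℝ, t ≠ c := by
        simp [ae_iff]
      filter_upwards [hne] with t ht
      rcases lt_or_gt_of_ne ht with h | h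
      · rw [Set.indicator_of_notMem (by simp [h.le])]
        have h1 : Tendsto (fun n : ℕ => (n : ℝ) * (c - t)) atTop atTop :=
          tendsto_natCast_atTop_atTop.atTop_mul_const (by linarith)
        have h2 := (Real.tendsto_exp_neg_atTop_nhds_zero.comp
          (Real.tendsto_exp_atTop.comp h1)).mul_const (F t)
        simpa using h2
      · rw [Set.indicator_of_mem (by simpa using h)]
        have h1 : Tendsto (fun n : ℕ => (n : ℝ) * (c - t)) atTop atBot :=
          tendsto_natCast_atTop_atTop.atTop_mul_const_of_neg (by linarith)
        have h2 := ((Real.continuous_exp.tendsto _).comp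
          (Real.tendsto_exp_atBot.comp h1).neg).mul_const (F t)
        simpa using h2
  have heq := tendsto_nhds_unique hlim1 hlim2
  rw [MeasureTheory.integral_indicator measurableSet_Ioi] at heq
  have := intervalIntegral.integral_Iic_add_Ioi (b := c) hF.integrableOn hF.integrableOn
  linarith

lemma sq_zero {f : ℝ → ℝ} (hf : Continuous f) (h : ∀ t > 0, lconv f f t = 0) :
    ∀ t > 0, f t = 0 := by
  have main : ∀ c > 0, ∫ s in (0:ℝ)..c, f s = 0 := by
    intro c hc
    set T := c + 1 with hT
    set F := trT (2 * T) f with hFdef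
    have hF : Integrable F := trT_int (LocI_cont hf) _
    have hF0 : ∀ s ≤ 0, F s = 0 := fun s hs => trT_zero hs
    have hz : ∀ t ≤ 2 * T, cvR F F t = 0 := by
      intro t ht
      rcases le_or_gt t 0 with h0 | h0
      · exact cvR_zero hF0 hF0 t h0
      · rw [← lconv_eq_tr _ _ h0.le ht]; exact h t h0
    have hp := phragmen hF hF0 (T := T) (B := ∫ t, ‖F t‖) (c := c) (by linarith) ?_
    · rw [intervalIntegral.integral_of_le hc.le]
      refine Eq.trans ?_ hp
      rw [← MeasureTheory.integral_indicator measurableSet_Ioc, ← MeasureTheory.integral_indicator measurableSet_Iic]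
      congr 1; funext t
      by_cases h1 : t ∈ Set.Iic c
      · rw [Set.indicator_of_mem h1]
        by_cases h0 : 0 < t
        · rw [Set.indicator_of_mem (show t ∈ Set.Ioc 0 c from ⟨h0, h1⟩)]
          exact (trT_eq h0 (by have : t ≤ c := h1; linarith)).symm
        · rw [Set.indicator_of_notMem (fun hh => h0 hh.1), hF0 t (not_lt.1 h0)]
      · rw [Set.indicator_of_notMem h1, Set.indicator_of_notMem (fun hh => h1 hh.2)]
    · intro x hx
      set H : ℝ → ℝ := fun t => rexp (x * (T - t)) * F t with hH
      have hHi : Integrable H := by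
        refine (hF.norm.const_mul (rexp (x * T))).mono'
          ((by fun_prop : Continuous fun t => rexp (x * (T - t))).aestronglyMeasurable.mul hF.1)
          (Eventually.of_forall fun t => ?_)
        by_cases h : t ≤ 0
        · simp [hH, hF0 t h]
        · rw [norm_mul, Real.norm_of_nonneg (Real.exp_pos _).le]
          gcongr
          linarith
      have e1 : ∫ t, cvR H H t = (∫ t, H t) * ∫ t, H t := by
        rw [cvR_eq_conv, integral_convolution _ hHi hHi]; simp
      have e2 : ∫ t, cvR (fun s => ‖F s‖) (fun s => ‖F s‖) t = (∫ t, ‖F t‖) * ∫ t, ‖F t‖ := by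
        rw [cvR_eq_conv, integral_convolution _ hF.norm hF.norm]; simp
      have e3 : ∀ t, cvR H H t = rexp (x * (2 * T - t)) * cvR F F t := by
        intro t
        simp only [cvR, hH]
        rw [← MeasureTheory.integral_const_mul]
        congr 1; funext τ
        rw [show x * (2 * T - t) = x * (T - (t - τ)) + x * (T - τ) by ring, Real.exp_add]
        ring
      have e4 : |∫ t, cvR H H t| ≤ ∫ t, cvR (fun s => ‖F s‖) (fun s => ‖F s‖) t := by
        rw [← Real.norm_eq_abs]
        refine norm_integral_le_of_norm_le ?_ (Eventually.of_forall fun t => ?_)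
        · rw [cvR_eq_conv]; exact hF.norm.integrable_convolution _ hF.norm
        · have hnn : ‖cvR F F t‖ ≤ cvR (fun s => ‖F s‖) (fun s => ‖F s‖) t := by
            simp only [cvR]
            refine (MeasureTheory.norm_integral_le_integral_norm _).trans (le_of_eq ?_)
            simp only [norm_mul]
          rcases le_or_gt t (2 * T) with h0 | h0
          · rw [e3, hz t h0, mul_zero, norm_zero]; exact (norm_nonneg _).trans hnn
          · rw [e3, norm_mul, Real.norm_of_nonneg (Real.exp_pos _).le]
            refine le_trans ?_ hnn
            refine mul_le_of_le_one_left (norm_nonneg _) (Real.exp_le_one_iff.2 ?_)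
            nlinarith
      rw [e1, e2, abs_mul] at e4
      exact (mul_self_le_mul_self_iff (abs_nonneg _) (integral_nonneg fun _ => norm_nonneg _)).2 e4
  intro t ht
  have hd := intervalIntegral.integral_hasDerivAt_right (a := 0) (b := t)
    (hf.intervalIntegrable _ _) (hf.stronglyMeasurableAtFilter _ _) hf.continuousAt
  have h0 : HasDerivAt (fun u => ∫ s in (0:ℝ)..u, f s) 0 t := by
    refine (hasDerivAt_const t (0:ℝ)).congr_of_eventuallyEq ?_
    filter_upwards [lt_mem_nhds ht] with u hu
    exact main u hu
  exact hd.unique h0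

lemma mul_step {f g : ℝ → ℝ} (hf : Continuous f) (hg : Continuous g)
    (h : ∀ t > 0, lconv f g t = 0) : ∀ t > 0, lconv f (fun s => s * g s) t = 0 := by
  set f1 : ℝ → ℝ := fun s => s * f s with hf1
  set g1 : ℝ → ℝ := fun s => s * g s with hg1
  have cf1 : Continuous f1 := by fun_prop
  have cg1 : Continuous g1 := by fun_prop
  have hsum : ∀ t > 0, lconv f g1 t = (-1) * lconv g f1 t := by
    intro t ht
    have e : lconv f1 g t + lconv f g1 t = t * lconv f g t := by
      simp only [lconv]
      rw [← intervalIntegral.integral_add, ← intervalIntegral.integral_const_mul]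
      · congr 1; funext τ; simp only [hf1, hg1]; ring
      · exact Continuous.intervalIntegrable (by fun_prop) _ _
      · exact Continuous.intervalIntegrable (by fun_prop) _ _
    rw [h t ht, mul_zero, lconv_comm] at e
    linarith
  have hA : Continuous (lconv f g1) := lconv_cont hf cg1
  refine sq_zero hA ?_
  intro t ht
  have as : ∀ {a b c : ℝ → ℝ}, Continuous a → Continuous b → Continuous c → ∀ t > 0,
      lconv (lconv a b) c t = lconv a (lconv b c) t := fun ha hb hc t ht =>
    lconv_assoc (LocI_cont ha) (LocB_cont ha) (LocI_cont hb) (LocI_cont hc) t (le_of_lt ht)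
  have key : lconv (lconv f g1) (lconv g f1) t = 0 := by
    rw [as hf cg1 (lconv_cont hg cf1) t ht]
    rw [lconv_congr (f := f) (f' := f) (g' := lconv g (lconv g1 f1)) (fun _ _ => rfl) ?_ t ht.le]
    · rw [← as hf hg (lconv_cont cg1 cf1) t ht]
      rw [lconv_congr (f' := fun _ => 0) (g' := lconv g1 f1) h (fun _ _ => rfl) t ht.le]
      simp [lconv]
    · intro s hs
      rw [← as cg1 hg cf1 s hs, ← as hg cg1 cf1 s hs]
      exact lconv_congr (fun u _ => lconv_comm _ _ u) (fun _ _ => rfl) s hs.le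
  rw [lconv_congr (f' := lconv f g1) (g' := fun s => (-1) * lconv g f1 s) (fun _ _ => rfl) hsum t ht.le]
  have : lconv (lconv f g1) (fun s => (-1) * lconv g f1 s) t
      = (-1) * lconv (lconv f g1) (lconv g f1) t := by
    simp only [lconv]
    rw [← intervalIntegral.integral_const_mul]
    congr 1; funext τ; ring
  rw [this, key, mul_zero]

lemma mul_pow_step {f g : ℝ → ℝ} (hf : Continuous f) (hg : Continuous g)
    (h : ∀ t > 0, lconv f g t = 0) (n : ℕ) : ∀ t > 0, lconv f (fun s => s ^ n * g s) t = 0 := by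
  induction n with
  | zero => simpa using h
  | succ n ih =>
    have := mul_step hf (g := fun s => s ^ n * g s) (by fun_prop) ih
    have e : (fun s : ℝ => s ^ (n + 1) * g s) = fun s => s * (s ^ n * g s) := by
      funext s; ring
    rw [e]; exact this

lemma moments_zero {ψ : ℝ → ℝ} (hψ : Continuous ψ) {T : ℝ} (hT : 0 < T)
    (h : ∀ n : ℕ, ∫ s in (0:ℝ)..T, s ^ n * ψ s = 0) : ∀ s ∈ Set.Ioo 0 T, ψ s = 0 := by
  have hpoly : ∀ p : Polynomial ℝ, ∫ s in (0:ℝ)..T, p.eval s * ψ s = 0 := by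
    intro p
    have : ∀ s, p.eval s * ψ s = ∑ i ∈ Finset.range (p.natDegree + 1), p.coeff i * (s ^ i * ψ s) := by
      intro s
      rw [Polynomial.eval_eq_sum_range, Finset.sum_mul]
      simp only [mul_assoc]
    simp only [this]
    rw [intervalIntegral.integral_finsetSum]
    · simp [h]
    · intro i _
      exact Continuous.intervalIntegrable (by fun_prop) _ _
  have hle : ∀ ε > 0, ∫ s in (0:ℝ)..T, ψ s * ψ s ≤ ε * ∫ s in (0:ℝ)..T, |ψ s| := by
    intro ε hε
    obtain ⟨p, hp⟩ := exists_polynomial_near_of_continuousOn 0 T ψ hψ.continuousOn ε hε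
    have e : ∫ s in (0:ℝ)..T, ψ s * ψ s = ∫ s in (0:ℝ)..T, (ψ s - p.eval s) * ψ s := by
      simp only [sub_mul]
      rw [intervalIntegral.integral_sub, hpoly, sub_zero]
      · exact Continuous.intervalIntegrable (by fun_prop) _ _
      · exact Continuous.intervalIntegrable (by fun_prop) _ _
    rw [e, ← intervalIntegral.integral_const_mul]
    refine intervalIntegral.integral_mono_on hT.le (Continuous.intervalIntegrable (by fun_prop) _ _)
      (Continuous.intervalIntegrable (by fun_prop) _ _) ?_
    intro s hs
    refine (le_abs_self _).trans ?_
    rw [abs_mul, abs_sub_comm]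
    exact mul_le_mul_of_nonneg_right (hp s hs).le (abs_nonneg _)
  intro s hs
  by_contra hne
  have hpos : 0 < ∫ s in (0:ℝ)..T, ψ s * ψ s := by
    refine intervalIntegral.integral_pos hT (by fun_prop) (fun _ _ => mul_self_nonneg _)
      ⟨s, ⟨hs.1.le, hs.2.le⟩, mul_self_pos.2 hne⟩
  have hnn : 0 ≤ ∫ s in (0:ℝ)..T, |ψ s| :=
    intervalIntegral.integral_nonneg hT.le fun _ _ => abs_nonneg _
  have := hle ((∫ s in (0:ℝ)..T, ψ s * ψ s) / (2 * ((∫ s in (0:ℝ)..T, |ψ s|) + 1))) (by positivity)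
  rw [div_mul_eq_mul_div, le_div_iff₀ (by positivity)] at this
  nlinarith

lemma titchmarsh_cont {f g : ℝ → ℝ} (hf : Continuous f) (hg : Continuous g)
    (h : ∀ t > 0, lconv f g t = 0) : (∀ t > 0, f t = 0) ∨ (∀ t > 0, g t = 0) := by
  by_contra! hcon
  obtain ⟨⟨a, ha, hfa⟩, ⟨b, hb, hgb⟩⟩ := hcon
  have := moments_zero (ψ := fun s => f (a + b - s) * g s) (by fun_prop) (T := a + b) (by linarith)
    (fun n => by
      have := mul_pow_step hf hg h n (a + b) (by linarith)
      simp only [lconv] at this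
      rw [← this]
      congr 1; funext s; ring) b ⟨hb, by linarith⟩
  simp only [add_sub_cancel_right] at this
  rcases mul_eq_zero.1 this with h | h
  exacts [hfa h, hgb h]

lemma CMinusOne.locI {f : ℝ → ℝ} (hf : CMinusOne f) : LocI f := by
  obtain ⟨p, hp, f₁, hc, he⟩ := hf
  intro T
  rcases le_or_gt T 0 with h0 | h0
  · simp [Set.Ioc_eq_empty (not_lt.2 h0)]
  have h1 : IntervalIntegrable (fun x : ℝ => x ^ p) volume 0 T :=
    intervalIntegral.intervalIntegrable_rpow' hp
  have h2 : IntervalIntegrable (fun x : ℝ => x ^ p * f₁ x) volume 0 T :=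
    h1.mul_continuousOn (hc.mono (by rw [Set.uIcc_of_le h0.le]; exact Set.Icc_subset_Ici_self))
  rw [intervalIntegrable_iff_integrableOn_Ioc_of_le h0.le] at h2
  exact h2.congr_fun (fun x hx => (he x hx.1).symm) measurableSet_Ioc

lemma CMinusOne.contAt {f : ℝ → ℝ} (hf : CMinusOne f) {t : ℝ} (ht : 0 < t) : ContinuousAt f t := by
  obtain ⟨p, hp, f₁, hc, he⟩ := hf
  have h1 : ContinuousAt (fun x : ℝ => x ^ p * f₁ x) t :=
    (Real.continuousAt_rpow_const t p (Or.inl ht.ne')).mul (hc.continuousAt (Ici_mem_nhds ht))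
  refine h1.congr ?_
  filter_upwards [lt_mem_nhds ht] with u hu
  exact (he u hu).symm

/-- the primitive, with `f` cut off on the negative axis -/
noncomputable def prim (f : ℝ → ℝ) : ℝ → ℝ := fun t => ∫ s in (0:ℝ)..t, Set.indicator (Set.Ioi 0) f s

lemma ind_int {f : ℝ → ℝ} (hf : LocI f) (a b : ℝ) :
    IntervalIntegrable (Set.indicator (Set.Ioi 0) f) volume a b := by
  have h : IntegrableOn (Set.indicator (Set.Ioi 0) f) (Set.Iic (max a b)) := by
    rw [IntegrableOn, integrable_indicator_iff measurableSet_Ioi, IntegrableOn,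
      Measure.restrict_restrict measurableSet_Ioi, Set.Ioi_inter_Iic]
    exact hf _
  rw [intervalIntegrable_iff]
  exact h.mono_set fun x hx => hx.2

lemma prim_cont {f : ℝ → ℝ} (hf : LocI f) : Continuous (prim f) :=
  intervalIntegral.continuous_primitive (ind_int hf) 0

lemma prim_eq {f : ℝ → ℝ} (t : ℝ) (ht : 0 < t) : lconv (fun _ => 1) f t = prim f t := by
  simp only [lconv, prim, one_mul]
  rw [intervalIntegral.integral_of_le ht.le, intervalIntegral.integral_of_le ht.le]
  exact setIntegral_congr_fun measurableSet_Ioc fun s hs =>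
    (Set.indicator_of_mem (show s ∈ Set.Ioi 0 from hs.1) f).symm

lemma prim_lconv {f g : ℝ → ℝ} (hf : LocI f) (hg : LocI g) (h : ∀ t > 0, lconv f g t = 0) :
    ∀ t > 0, lconv (prim f) g t = 0 := by
  intro t ht
  rw [← lconv_congr (f := lconv (fun _ => 1) f) (g := g) prim_eq (fun _ _ => rfl) t ht.le,
    lconv_assoc (LocI_cont continuous_const) (LocB_cont continuous_const) hf hg t ht.le,
    lconv_congr (f' := fun _ => 1) (g' := fun _ => 0) (fun _ _ => rfl) h t ht.le]
  simp [lconv]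

lemma prim_zero {f : ℝ → ℝ} (hf : CMinusOne f) (h : ∀ t > 0, prim f t = 0) : ∀ t > 0, f t = 0 := by
  intro t ht
  have hev : Set.indicator (Set.Ioi 0) f =ᶠ[nhds t] f := by
    filter_upwards [lt_mem_nhds ht] with u hu
    exact Set.indicator_of_mem (show u ∈ Set.Ioi 0 from hu) f
  have hm : StronglyMeasurableAtFilter (Set.indicator (Set.Ioi 0) f) (nhds t) volume := by
    refine ⟨Set.Ioc 0 (t + 1), Ioc_mem_nhds ht (by linarith), ?_⟩
    have := ind_int hf.locI 0 (t + 1)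
    rw [intervalIntegrable_iff_integrableOn_Ioc_of_le (by linarith)] at this
    exact this.1
  have hd := intervalIntegral.integral_hasDerivAt_right (a := 0) (b := t)
    (ind_int hf.locI 0 t) hm ((hf.contAt ht).congr hev.symm)
  have h0 : HasDerivAt (prim f) 0 t := by
    refine (hasDerivAt_const t (0:ℝ)).congr_of_eventuallyEq ?_
    filter_upwards [lt_mem_nhds ht] with u hu
    exact h u hu
  rw [← hev.eq_of_nhds]
  exact hd.unique h0

/-- The ring `(C_{-1}(0,∞), +, *)` with Laplace-convolution multiplication has no
divisors of zero. -/
theorem CMinusOne_no_zero_divisors (f g : ℝ → ℝ) (hf : CMinusOne f) (hg : CMinusOne g)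
    (h : ∀ t > (0:ℝ), lconv f g t = 0) :
    (∀ t > (0:ℝ), f t = 0) ∨ (∀ t > (0:ℝ), g t = 0) := by
  have hfI := hf.locI
  have hgI := hg.locI
  have h1 := prim_lconv hfI hgI h
  have h2 : ∀ t > 0, lconv (prim g) (prim f) t = 0 :=
    prim_lconv hgI (LocI_cont (prim_cont hfI)) fun t ht => by rw [lconv_comm]; exact h1 t ht
  rcases titchmarsh_cont (prim_cont hgI) (prim_cont hfI) h2 with h3 | h3
  · exact Or.inr (prim_zero hg h3)
  · exact Or.inl (prim_zero hf h3)
end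

section
/- First fundamental theorem of FC for the general fractional derivative of Caputo type: let (κ, k) ∈ L₁ and f ∈ C_{-1,(k)}(0,∞), i.e. f = k * φ for some φ ∈ C_{-1}(0,∞). Then ( *D_{(k)} I_{(κ)} f)(t) = f(t) for all t > 0; explicitly, the function g = κ * f has a finite limit g(0) := lim_{s→0+} g(s), k * g is differentiable on (0,∞), and d/dt (k * g)(t) − g(0) k(t) = f(t) for all t > 0. -/
open Real Filter MeasureTheory intervalIntegral

/-- The class `L₁` of Sonin kernel pairs: `κ, k ∈ C_{-1}(0,∞)` with `(κ * k)(t) = 1`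
for all `t > 0`. -/
def SoninPair (κ k : ℝ → ℝ) : Prop :=
  CMinusOne κ ∧ CMinusOne k ∧ ∀ t > (0:ℝ), lconv κ k t = 1

/-- Globally continuous representative. -/
theorem CMinusOne.repr {f : ℝ → ℝ} (hf : CMinusOne f) :
    ∃ p : ℝ, -1 < p ∧ ∃ f₁ : ℝ → ℝ, Continuous f₁ ∧ ∀ t > (0:ℝ), f t = t ^ p * f₁ t := by
  obtain ⟨p, hp, f₁, hc, h⟩ := hf
  refine ⟨p, hp, fun t => f₁ (max t 0), ?_, ?_⟩
  · exact hc.comp_continuous (by fun_prop) (fun t => Set.mem_Ici.2 (le_max_right t 0))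
  · intro t ht
    simp only [max_eq_left ht.le]
    exact h t ht

theorem CMinusOne.abs {f : ℝ → ℝ} (hf : CMinusOne f) : CMinusOne (fun t => |f t|) := by
  obtain ⟨p, hp, f₁, hc, h⟩ := hf
  refine ⟨p, hp, fun t => |f₁ t|, hc.abs, fun t ht => ?_⟩
  simp only [h t ht, abs_mul, abs_of_pos (rpow_pos_of_pos ht p)]

theorem CMinusOne.congr {f g : ℝ → ℝ} (hf : CMinusOne f) (h : ∀ t > (0:ℝ), g t = f t) :
    CMinusOne g := by
  obtain ⟨p, hp, f₁, hc, h'⟩ := hf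
  exact ⟨p, hp, f₁, hc, fun t ht => (h t ht).trans (h' t ht)⟩

theorem cMinusOne_one : CMinusOne (fun _ => 1) :=
  ⟨0, by norm_num, fun _ => 1, continuousOn_const, fun t _ => by simp⟩

theorem CMinusOne.continuousOn {f : ℝ → ℝ} (hf : CMinusOne f) :
    ContinuousOn f (Set.Ioi 0) := by
  obtain ⟨p, hp, f₁, hc, h⟩ := hf.repr
  have : ContinuousOn (fun t : ℝ => t ^ p * f₁ t) (Set.Ioi 0) := by
    intro t ht
    exact ((Real.continuousAt_rpow_const t p (Or.inl (ne_of_gt ht))).mul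
      hc.continuousAt).continuousWithinAt
  exact this.congr fun t ht => h t ht

theorem CMinusOne.intervalIntegrable {f : ℝ → ℝ} (hf : CMinusOne f) {t : ℝ} (ht : 0 < t) :
    IntervalIntegrable f volume 0 t := by
  obtain ⟨p, hp, f₁, hc, h⟩ := hf.repr
  have : IntervalIntegrable (fun x : ℝ => x ^ p * f₁ x) volume 0 t :=
    (intervalIntegrable_rpow' hp).mul_continuousOn hc.continuousOn
  refine this.congr_uIoo fun x hx => ?_
  rw [Set.uIoo_of_le ht.le] at hx
  exact (h x hx.1).symm

theorem weight_half {p q : ℝ} (hq : -1 < q) {t : ℝ} (ht : 0 < t) :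
    IntervalIntegrable (fun x : ℝ => (t - x) ^ p * x ^ q) volume 0 (t / 2) := by
  refine (intervalIntegrable_rpow' hq).continuousOn_mul ?_
  rw [Set.uIcc_of_le (by linarith)]
  intro x hx
  have hx2 := hx.2
  refine ContinuousAt.continuousWithinAt ?_
  refine ContinuousAt.rpow_const (by fun_prop) (Or.inl ?_)
  linarith

theorem weight_int {p q : ℝ} (hp : -1 < p) (hq : -1 < q) {t : ℝ} (ht : 0 < t) :
    IntervalIntegrable (fun x : ℝ => (t - x) ^ p * x ^ q) volume 0 t := by
  refine (weight_half hq ht).trans ?_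
  have h := (weight_half (p := q) hp ht).comp_sub_left t
  have e : t - t / 2 = t / 2 := by ring
  simp only [sub_zero, sub_sub_cancel, e] at h
  refine h.symm.congr_uIoo fun x _ => ?_
  simp only [mul_comm]

theorem lconv_integrable {f g : ℝ → ℝ} (hf : CMinusOne f) (hg : CMinusOne g) {t : ℝ}
    (ht : 0 < t) : IntervalIntegrable (fun τ => f (t - τ) * g τ) volume 0 t := by
  obtain ⟨p, hp, f₁, hfc, hf⟩ := hf.repr
  obtain ⟨q, hq, g₁, hgc, hg⟩ := hg.repr
  have : IntervalIntegrable (fun x : ℝ => ((t - x) ^ p * x ^ q) * (f₁ (t - x) * g₁ x))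
      volume 0 t := (weight_int hp hq ht).mul_continuousOn (by fun_prop)
  refine this.congr_uIoo fun x hx => ?_
  rw [Set.uIoo_of_le ht.le] at hx
  simp only [hf (t - x) (by linarith [hx.2]), hg x hx.1]
  ring

theorem CMinusOne.lconv_mem {f g : ℝ → ℝ} (hf : CMinusOne f) (hg : CMinusOne g) :
    CMinusOne (lconv f g) := by
  obtain ⟨p, hp, f₁, hfc, hf⟩ := hf.repr
  obtain ⟨q, hq, g₁, hgc, hg⟩ := hg.repr
  refine ⟨p + q + 1, by linarith, fun t => ∫ u in (0:ℝ)..1,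
    ((1 - u) ^ p * u ^ q) * (f₁ (t * (1 - u)) * g₁ (t * u)), ?_, ?_⟩
  · refine Continuous.continuousOn (continuous_iff_continuousAt.2 fun t₀ => ?_)
    have hw := weight_int hp hq (t := 1) one_pos
    have hcont : Continuous (fun z : ℝ × ℝ => f₁ (z.1 * (1 - z.2)) * g₁ (z.1 * z.2)) := by
      fun_prop
    obtain ⟨C, hC⟩ := ((isCompact_Icc (a := t₀ - 1) (b := t₀ + 1)).prod
      (isCompact_Icc (a := (0:ℝ)) (b := 1))).exists_bound_of_continuousOn hcont.continuousOn
    refine continuousAt_of_dominated_interval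
      (bound := fun u => ‖(1 - u) ^ p * u ^ q‖ * C) ?_ ?_ (hw.norm.mul_const C) ?_
    · refine Eventually.of_forall fun t => ?_
      exact (hw.mul_continuousOn (g := fun u => f₁ (t * (1 - u)) * g₁ (t * u))
        (by fun_prop)).def'.aestronglyMeasurable
    · filter_upwards [Icc_mem_nhds (show t₀ - 1 < t₀ by linarith)
        (show t₀ < t₀ + 1 by linarith)] with t ht
      refine Eventually.of_forall fun u hu => ?_
      rw [Set.uIoc_of_le zero_le_one] at hu
      rw [norm_mul]
      exact mul_le_mul_of_nonneg_left (hC (t, u) ⟨ht, hu.1.le, hu.2⟩) (norm_nonneg _)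
    · exact Eventually.of_forall fun u _ => by fun_prop
  · intro t ht
    have h1 := mul_integral_comp_mul_left (a := 0) (b := 1)
      (f := fun τ => f (t - τ) * g τ) (c := t)
    rw [mul_zero, mul_one] at h1
    have h2 : (∫ u in (0:ℝ)..1, f (t - t * u) * g (t * u)) =
        ∫ u in (0:ℝ)..1, (t ^ p * t ^ q) *
          (((1 - u) ^ p * u ^ q) * (f₁ (t * (1 - u)) * g₁ (t * u))) := by
      refine integral_congr_Ioo_of_le zero_le_one fun u hu => ?_
      have hu1 : 0 < 1 - u := by linarith [hu.2]
      have e : t - t * u = t * (1 - u) := by ring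
      simp only [e, hf _ (mul_pos ht hu1), hg _ (mul_pos ht hu.1),
        mul_rpow ht.le hu1.le, mul_rpow ht.le hu.1.le]
      ring
    change (∫ τ in (0:ℝ)..t, f (t - τ) * g τ) = _
    rw [← h1, h2, intervalIntegral.integral_const_mul, rpow_add ht, rpow_add ht, rpow_one]
    ring

/-- Extension by zero. -/
noncomputable def ext0 (f : ℝ → ℝ) : ℝ → ℝ := (Set.Ioi (0:ℝ)).indicator f

theorem ext0_integrand (f g : ℝ → ℝ) (t : ℝ) :
    (fun τ => ext0 g τ * ext0 f (t - τ)) =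
      (Set.Ioo 0 t).indicator (fun τ => f (t - τ) * g τ) := by
  funext τ
  simp only [ext0, Set.indicator, Set.mem_Ioi, Set.mem_Ioo, sub_pos]
  by_cases h1 : 0 < τ <;> by_cases h2 : τ < t <;> simp [h1, h2, mul_comm]

open scoped Convolution in
theorem ext0_conv (f g : ℝ → ℝ) :
    (ext0 g ⋆[ContinuousLinearMap.mul ℝ ℝ, volume] ext0 f) = ext0 (lconv f g) := by
  funext t
  change (∫ τ, ext0 g τ * ext0 f (t - τ)) = _
  rw [ext0_integrand, MeasureTheory.integral_indicator measurableSet_Ioo]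
  by_cases ht : 0 < t
  · rw [ext0, Set.indicator_of_mem (show t ∈ Set.Ioi (0:ℝ) from ht), lconv,
      intervalIntegral.integral_of_le ht.le, integral_Ioc_eq_integral_Ioo]
  · rw [ext0, Set.indicator_of_notMem (show t ∉ Set.Ioi (0:ℝ) from ht),
      Set.Ioo_eq_empty ht]
    simp

theorem ext0_exists {f g : ℝ → ℝ} (hf : CMinusOne f) (hg : CMinusOne g) (t : ℝ) :
    ConvolutionExistsAt (ext0 g) (ext0 f) t (ContinuousLinearMap.mul ℝ ℝ) volume := by
  change Integrable (fun τ => ext0 g τ * ext0 f (t - τ)) volume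
  rw [ext0_integrand, integrable_indicator_iff measurableSet_Ioo]
  by_cases ht : 0 < t
  · exact ((intervalIntegrable_iff_integrableOn_Ioc_of_le ht.le).1
      (lconv_integrable hf hg ht)).mono_set Set.Ioo_subset_Ioc_self
  · rw [Set.Ioo_eq_empty ht]
    exact integrableOn_empty

theorem ext0_meas {f : ℝ → ℝ} (hf : CMinusOne f) : AEStronglyMeasurable (ext0 f) volume := by
  rw [ext0, aestronglyMeasurable_indicator_iff measurableSet_Ioi]
  exact hf.continuousOn.aestronglyMeasurable measurableSet_Ioi

theorem ext0_norm (f : ℝ → ℝ) : (fun x => ‖ext0 f x‖) = ext0 (fun t => |f t|) := by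
  funext x
  simp only [ext0, Set.indicator]
  split_ifs <;> simp

theorem ext0_apply {f : ℝ → ℝ} {t : ℝ} (ht : 0 < t) : ext0 f t = f t :=
  Set.indicator_of_mem (show t ∈ Set.Ioi (0:ℝ) from ht) f

theorem lconv_assoc_s3 {a b c : ℝ → ℝ} (ha : CMinusOne a) (hb : CMinusOne b) (hc : CMinusOne c)
    {t : ℝ} (ht : 0 < t) : lconv a (lconv b c) t = lconv (lconv a b) c t := by
  rw [← ext0_apply (f := lconv a (lconv b c)) ht, ← ext0_apply (f := lconv (lconv a b) c) ht,
    ← ext0_conv, ← ext0_conv, ← ext0_conv, ← ext0_conv]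
  refine convolution_assoc _ _ _ _ (fun x y z => by simp [mul_assoc]) (ext0_meas hc)
    (ext0_meas hb) (ext0_meas ha) ?_ ?_ ?_
  · exact Eventually.of_forall fun y => ext0_exists hb hc y
  · simp only [ext0_norm]
    exact Eventually.of_forall fun y => ext0_exists ha.abs hb.abs y
  · simp only [ext0_norm]
    rw [ext0_conv]
    exact ext0_exists (ha.abs.lconv_mem hb.abs) hc.abs t

theorem lconv_comm_s3 (a b : ℝ → ℝ) (t : ℝ) : lconv a b t = lconv b a t := by
  have h := integral_comp_sub_left (a := 0) (b := t) (fun τ => b (t - τ) * a τ) t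
  simp only [sub_self, sub_zero, sub_sub_cancel] at h
  rw [lconv, lconv, ← h]
  simp only [mul_comm]

theorem lconv_congr_s3 {a a' b b' : ℝ → ℝ} (ha : ∀ t > (0:ℝ), a t = a' t)
    (hb : ∀ t > (0:ℝ), b t = b' t) {t : ℝ} (ht : 0 < t) : lconv a b t = lconv a' b' t := by
  refine integral_congr_Ioo_of_le ht.le fun x hx => ?_
  simp only [ha (t - x) (by linarith [hx.2]), hb x hx.1]

/-- First fundamental theorem of FC for the GFD of Caputo type: for `(κ, k) ∈ L₁`
and `f ∈ C_{-1,(k)}(0,∞)` (i.e. `f = k * φ` with `φ ∈ C_{-1}(0,∞)`), the function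
`g = κ * f` has a finite limit `g(0)` as `s → 0+`, `k * g` is differentiable on
`(0,∞)`, and `d/dt (k * g)(t) − g(0) k(t) = f(t)` for all `t > 0`, i.e.
`( *D_{(k)} I_{(κ)} f)(t) = f(t)`. -/
theorem first_fundamental_theorem_Caputo (κ k f φ : ℝ → ℝ) (hκk : SoninPair κ k)
    (hφ : CMinusOne φ) (hfφ : ∀ t > (0:ℝ), f t = lconv k φ t) :
    ∃ g0 : ℝ, Tendsto (lconv κ f) (nhdsWithin 0 (Set.Ioi 0)) (nhds g0) ∧
      ∀ t > (0:ℝ),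
        HasDerivAt (lconv k (lconv κ f)) (f t + g0 * k t) t := by
  obtain ⟨hκ, hk, hS⟩ := hκk
  have hf : CMinusOne f := (hk.lconv_mem hφ).congr hfφ
  have hone := cMinusOne_one
  have hg : ∀ t > (0:ℝ), lconv κ f t = lconv (fun _ => 1) φ t := by
    intro t ht
    rw [lconv_congr_s3 (fun _ _ => rfl) hfφ ht, lconv_assoc_s3 hκ hk hφ ht]
    exact lconv_congr_s3 hS (fun _ _ => rfl) ht
  have hkg : ∀ t > (0:ℝ), lconv k (lconv κ f) t = ∫ τ in (0:ℝ)..t, f τ := by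
    intro t ht
    rw [lconv_congr_s3 (fun _ _ => rfl) hg ht, lconv_assoc_s3 hk hone hφ ht,
      lconv_congr_s3 (fun s _ => lconv_comm_s3 k _ s) (fun _ _ => rfl) ht,
      ← lconv_assoc_s3 hone hk hφ ht,
      lconv_congr_s3 (fun _ _ => rfl) (fun s hs => (hfφ s hs).symm) ht]
    simp [lconv]
  refine ⟨0, ?_, ?_⟩
  · have hc := continuousOn_primitive_interval' (hφ.intervalIntegrable one_pos)
      (Set.left_mem_uIcc)
    have h0 := hc 0 Set.left_mem_uIcc
    rw [ContinuousWithinAt, integral_same, Set.uIcc_of_le zero_le_one] at h0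
    have h1 : Tendsto (fun b => ∫ x in (0:ℝ)..b, φ x) (nhdsWithin 0 (Set.Ioi 0)) (nhds 0) := by
      refine h0.mono_left ?_
      rw [← nhdsWithin_Ioc_eq_nhdsGT (zero_lt_one (α := ℝ))]
      exact nhdsWithin_mono _ Set.Ioc_subset_Icc_self
    refine h1.congr' ?_
    filter_upwards [self_mem_nhdsWithin] with s hs
    rw [hg s hs]
    simp [lconv]
  · intro t ht
    rw [zero_mul, add_zero]
    have hmem : Set.Ioi (0:ℝ) ∈ nhds t := Ioi_mem_nhds ht
    have hd := integral_hasDerivAt_right (hf.intervalIntegrable ht)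
      (hf.continuousOn.stronglyMeasurableAtFilter isOpen_Ioi t ht)
      (hf.continuousOn.continuousAt hmem)
    refine hd.congr_of_eventuallyEq ?_
    filter_upwards [hmem] with s hs
    exact hkg s hs
end

section
/- The general fractional derivative of Riemann–Liouville type is a right inverse operator to the general fractional integral on C_{-1,(κ)}(0,∞): let (κ, k) ∈ L₁ and let f = κ * φ with φ ∈ C_{-1}(0,∞). Then the function k * f is differentiable on (0,∞) and (κ * D_{(k)} f)(t) = f(t) for all t > 0. -/
open Real Filter MeasureTheory intervalIntegral

open Set Topology in
lemma cm_cont {f : ℝ → ℝ} (hf : CMinusOne f) : ContinuousOn f (Ioi 0) := by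
  obtain ⟨p, hp, f₁, h1, h2⟩ := hf
  have : ContinuousOn (fun t : ℝ => t ^ p * f₁ t) (Ioi 0) := by
    apply ContinuousOn.mul
    · intro x hx
      exact (Real.continuousAt_rpow_const x p (Or.inl (ne_of_gt hx))).continuousWithinAt
    · exact h1.mono Ioi_subset_Ici_self
  exact this.congr (fun t ht => h2 t ht)

open Set Topology in
lemma cm_bound {f : ℝ → ℝ} (hf : CMinusOne f) (T : ℝ) :
    ∃ p : ℝ, -1 < p ∧ ∃ C : ℝ, 0 ≤ C ∧ ∀ x ∈ Ioc (0:ℝ) T, |f x| ≤ C * x ^ p := by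
  obtain ⟨p, hp, f₁, h1, h2⟩ := hf
  obtain ⟨C, hC⟩ := (isCompact_Icc (a := (0:ℝ)) (b := T)).exists_bound_of_continuousOn
    (h1.mono Icc_subset_Ici_self)
  refine ⟨p, hp, |C|, abs_nonneg _, fun x hx => ?_⟩
  rw [h2 x hx.1, abs_mul, abs_of_nonneg (Real.rpow_nonneg hx.1.le p), mul_comm]
  have := hC x ⟨hx.1.le, hx.2⟩
  rw [Real.norm_eq_abs] at this
  exact mul_le_mul_of_nonneg_right (this.trans (le_abs_self C)) (Real.rpow_nonneg hx.1.le p)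

open Set Topology in
lemma cm_int {f : ℝ → ℝ} (hf : CMinusOne f) (T : ℝ) (hT : 0 < T) :
    IntegrableOn f (Ioc 0 T) := by
  obtain ⟨p, hp, C, hC, h⟩ := cm_bound hf T
  have h1 : IntegrableOn (fun x : ℝ => C * x ^ p) (Ioc 0 T) := by
    have := (intervalIntegral.intervalIntegrable_rpow' (a := 0) (b := T) hp).const_mul C
    exact (intervalIntegrable_iff_integrableOn_Ioc_of_le hT.le).1 this
  refine Integrable.mono' h1 ?_ ?_
  · exact ((cm_cont hf).mono Ioc_subset_Ioi_self).aestronglyMeasurable measurableSet_Ioc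
  · exact (ae_restrict_iff' measurableSet_Ioc).2 (Eventually.of_forall fun x hx => h x hx)

open Set Topology in
lemma beta_int_s8 {a b : ℝ} (ha : -1 < a) (hb : -1 < b) (T : ℝ) (hT : 0 < T) :
    IntervalIntegrable (fun s : ℝ => s ^ a * (T - s) ^ b) volume 0 T := by
  have key : ∀ a b : ℝ, -1 < a → 
      IntervalIntegrable (fun s : ℝ => s ^ a * (T - s) ^ b) volume 0 (T/2) := by
    intro a b ha
    refine (intervalIntegral.intervalIntegrable_rpow' ha).mul_continuousOn ?_
    intro x hx
    rw [uIcc_of_le (by linarith)] at hx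
    have : T - x ≠ 0 := by have := hx.2; intro h; linarith
    exact ((continuousAt_const.sub continuousAt_id).rpow_const (Or.inl this)).continuousWithinAt
  refine (key a b ha).trans ?_
  have := ((key b a hb).comp_sub_left T).symm
  simp only [sub_zero, sub_sub_cancel] at this
  rw [show T - T / 2 = T / 2 by ring] at this
  simpa only [mul_comm] using this

open Set Topology in
lemma beta_scaled {a b : ℝ} (y : ℝ) (hy : 0 < y) :
    ∫ s in (0:ℝ)..y, s ^ a * (y - s) ^ b
      = y ^ (a + b + 1) * ∫ s in (0:ℝ)..1, s ^ a * (1 - s) ^ b := by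
  have := intervalIntegral.mul_integral_comp_mul_left (a := 0) (b := 1)
    (f := fun s : ℝ => s ^ a * (y - s) ^ b) y
  rw [mul_zero, mul_one] at this
  rw [← this, ← intervalIntegral.integral_const_mul, ← intervalIntegral.integral_const_mul]
  apply intervalIntegral.integral_congr
  intro s hs
  rw [uIcc_of_le zero_le_one] at hs
  have h1 : y - y * s = y * (1 - s) := by ring
  simp only [h1]
  rw [Real.mul_rpow hy.le hs.1, Real.mul_rpow hy.le (by linarith [hs.2]), Real.rpow_add hy,
    Real.rpow_add hy, Real.rpow_one]
  ring

open Set Topology in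
/-- convolution of truncated functions, as a set integral -/
lemma conv_trunc (f g : ℝ → ℝ) (T t : ℝ) (ht : t ≤ T) :
    convolution (indicator (Ioc 0 T) g) (indicator (Ioc 0 T) f) (ContinuousLinearMap.mul ℝ ℝ) volume t
      = ∫ τ in Ioo 0 t, g τ * f (t - τ) := by
  rw [convolution_def, ← MeasureTheory.integral_indicator measurableSet_Ioo]
  congr 1
  ext τ
  simp only [ContinuousLinearMap.mul_apply', indicator, mem_Ioc, mem_Ioo]
  by_cases h : 0 < τ ∧ τ < t
  · rw [if_pos h, if_pos ⟨h.1, by linarith⟩, if_pos ⟨by linarith, by linarith⟩]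
  · rw [if_neg h]
    by_cases h0 : 0 < τ
    · have : ¬ (τ < t) := fun h' => h ⟨h0, h'⟩
      rw [if_neg (c := 0 < t - τ ∧ _) (fun h' => this (by linarith [h'.1])), mul_zero]
    · rw [if_neg (fun h' => h0 h'.1), zero_mul]

open Set Topology in
lemma lconv_Ioo (f g : ℝ → ℝ) (t : ℝ) (ht : 0 ≤ t) :
    lconv f g t = ∫ τ in Ioo 0 t, g τ * f (t - τ) := by
  rw [lconv, intervalIntegral.integral_of_le ht, integral_Ioc_eq_integral_Ioo]
  simp only [mul_comm]

open Set Topology in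
lemma norm_trunc (f : ℝ → ℝ) (T : ℝ) :
    (fun x => ‖indicator (Ioc 0 T) f x‖) = indicator (Ioc 0 T) (fun x => |f x|) := by
  ext x
  by_cases h : x ∈ Ioc 0 T <;> simp [h]

open Set Topology in
lemma conv_bound {f g : ℝ → ℝ} (hf : CMinusOne f) (hg : CMinusOne g) (T : ℝ) :
    ∃ c : ℝ, -1 < c ∧ ∃ C : ℝ, 0 ≤ C ∧ ∀ y ∈ Ioo (0:ℝ) T,
      abs (∫ τ in Ioo 0 y, |g τ| * |f (y - τ)|) ≤ C * y ^ c := by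
  obtain ⟨p, hp, C, hC, h⟩ := cm_bound hf T
  obtain ⟨q, hq, D, hD, h'⟩ := cm_bound hg T
  refine ⟨q + p + 1, by linarith, D * C * |∫ s in (0:ℝ)..1, s ^ q * (1 - s) ^ p|, by positivity, 
    fun y hy => ?_⟩
  have hi : IntegrableOn (fun s : ℝ => (D * C) * (s ^ q * (y - s) ^ p)) (Ioo 0 y) :=
    ((intervalIntegrable_iff_integrableOn_Ioo_of_le hy.1.le).1
      ((beta_int_s8 hq hp y hy.1).const_mul (D * C)))
  have h1 := norm_integral_le_of_norm_le (f := fun τ => |g τ| * |f (y - τ)|) hi (by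
    refine (ae_restrict_iff' measurableSet_Ioo).2 (Eventually.of_forall fun x hx => ?_)
    have a1 := h' x ⟨hx.1, by linarith [hx.2, hy.2]⟩
    have a2 := h (y - x) ⟨by linarith [hx.2], by linarith [hx.1, hy.2]⟩
    rw [Real.norm_eq_abs, abs_mul, abs_abs, abs_abs]
    calc |g x| * |f (y - x)| ≤ (D * x ^ q) * (C * (y - x) ^ p) :=
          mul_le_mul a1 a2 (abs_nonneg _) ((abs_nonneg _).trans a1)
      _ = _ := by ring)
  rw [Real.norm_eq_abs] at h1
  refine h1.trans ?_
  rw [← integral_Ioc_eq_integral_Ioo, ← intervalIntegral.integral_of_le hy.1.le, 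
    intervalIntegral.integral_const_mul, beta_scaled y hy.1]
  have : 0 ≤ D * C * y ^ (q + p + 1) := mul_nonneg (mul_nonneg hD hC) (Real.rpow_nonneg hy.1.le _)
  have := mul_le_mul_of_nonneg_left (le_abs_self (∫ s in (0:ℝ)..1, s ^ q * (1 - s) ^ p)) this
  linarith

open Set Topology in
lemma lconv_assoc_aux {k κ φ f : ℝ → ℝ} (hk : CMinusOne k) (hκ : CMinusOne κ) (hφ : CMinusOne φ)
    (hs : ∀ t > (0:ℝ), lconv κ k t = 1) (hf : ∀ t > (0:ℝ), f t = lconv κ φ t)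
    (T : ℝ) (hT : 0 < T) : lconv k f T = ∫ τ in (0:ℝ)..T, φ τ := by
  have iΦ := (cm_int hφ T hT).integrable_indicator measurableSet_Ioc
  have iκ := (cm_int hκ T hT).integrable_indicator measurableSet_Ioc
  have ik := (cm_int hk T hT).integrable_indicator measurableSet_Ioc
  have assoc := convolution_assoc (μ := volume) (ν := volume) (f := indicator (Ioc 0 T) φ) (g := indicator (Ioc 0 T) κ)
    (k := indicator (Ioc 0 T) k) (ContinuousLinearMap.mul ℝ ℝ) (ContinuousLinearMap.mul ℝ ℝ)
    (ContinuousLinearMap.mul ℝ ℝ) (ContinuousLinearMap.mul ℝ ℝ) (x₀ := T)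
    (fun x y z => by simp [mul_assoc]) iΦ.1 iκ.1 ik.1
    (iΦ.ae_convolution_exists _ iκ) (iκ.norm.ae_convolution_exists _ ik.norm) (by
      have icv := (iκ.norm.integrable_convolution (ContinuousLinearMap.mul ℝ ℝ) ik.norm).comp_sub_left T
      obtain ⟨c, hc, C, hC, hb⟩ := conv_bound hk hκ T
      obtain ⟨r, hr, D, hD, hb'⟩ := cm_bound hφ T
      have hi : IntegrableOn (fun s : ℝ => (D * C) * (s ^ r * (T - s) ^ c)) (Ioo 0 T) :=
        ((intervalIntegrable_iff_integrableOn_Ioo_of_le hT.le).1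
          ((beta_int_s8 hr hc T hT).const_mul (D * C)))
      refine Integrable.mono' (hi.integrable_indicator measurableSet_Ioo) ?_ ?_
      · exact iΦ.norm.1.mul icv.1
      · refine Eventually.of_forall fun x => ?_
        rw [norm_trunc κ, norm_trunc k]
        simp only [ContinuousLinearMap.mul_apply']
        by_cases hx : x ∈ Ioo 0 T
        · rw [conv_trunc _ _ _ _ (by linarith [hx.1]), indicator_of_mem hx, 
            indicator_of_mem (Ioo_subset_Ioc_self hx), norm_mul, norm_norm]
          have b1 := hb (T - x) ⟨by linarith [hx.2], by linarith [hx.1]⟩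
          have b2 := hb' x (Ioo_subset_Ioc_self hx)
          calc _ ≤ (D * x ^ r) * (C * (T - x) ^ c) := 
                mul_le_mul b2 b1 (abs_nonneg _) ((abs_nonneg _).trans b2)
            _ = _ := by ring
        · rw [indicator_of_notMem hx]
          by_cases h2 : x ∈ Ioc 0 T
          · have : x = T := by
              by_contra h3
              exact hx ⟨h2.1, lt_of_le_of_ne h2.2 h3⟩
            rw [conv_trunc _ _ _ _ (by linarith [h2.1]), this]
            simp
          · rw [indicator_of_notMem h2]
            simp)
  have e1 : lconv k f T = convolution (convolution (indicator (Ioc 0 T) φ) (indicator (Ioc 0 T) κ)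
      (ContinuousLinearMap.mul ℝ ℝ) volume) (indicator (Ioc 0 T) k)
      (ContinuousLinearMap.mul ℝ ℝ) volume T := by
    rw [lconv_Ioo _ _ _ hT.le, convolution_def, ← MeasureTheory.integral_indicator measurableSet_Ioo]
    congr 1
    ext x
    rw [ContinuousLinearMap.mul_apply']
    by_cases hx : x ∈ Ioo 0 T
    · rw [indicator_of_mem hx, indicator_of_mem (show T - x ∈ Ioc 0 T from
        ⟨by linarith [hx.2], by linarith [hx.1]⟩), conv_trunc _ _ _ _ hx.2.le, hf x hx.1,
        lconv_Ioo _ _ _ hx.1.le]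
    · rw [indicator_of_notMem hx]
      by_cases h2 : x ≤ 0
      · rw [conv_trunc _ _ _ _ (h2.trans hT.le), Ioo_eq_empty (not_lt.2 h2)]
        simp
      · rw [indicator_of_notMem (s := Ioc 0 T) (a := T - x), mul_zero]
        intro h3
        exact hx ⟨not_le.1 h2, by linarith [h3.1]⟩
  rw [e1, assoc, convolution_def, intervalIntegral.integral_of_le hT.le, 
    integral_Ioc_eq_integral_Ioo, ← MeasureTheory.integral_indicator measurableSet_Ioo]
  congr 1
  ext x
  rw [ContinuousLinearMap.mul_apply']
  by_cases hx : x ∈ Ioo 0 T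
  · have h0 : 0 < T - x := by linarith [hx.2]
    rw [indicator_of_mem hx, indicator_of_mem (Ioo_subset_Ioc_self hx),
      conv_trunc _ _ _ _ (by linarith [hx.1]), ← lconv_Ioo _ _ _ h0.le, lconv_comm, hs _ h0, mul_one]
  · rw [indicator_of_notMem hx]
    by_cases h2 : x ∈ Ioc 0 T
    · have : x = T := by
        by_contra h3
        exact hx ⟨h2.1, lt_of_le_of_ne h2.2 h3⟩
      rw [conv_trunc _ _ _ _ (by linarith [h2.1]), this]
      simp
    · rw [indicator_of_notMem h2, zero_mul]

/-- The GFD of Riemann–Liouville type is a right inverse to the GFI on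
`C_{-1,(κ)}(0,∞)`: for `(κ, k) ∈ L₁` and `f = κ * φ` with `φ ∈ C_{-1}(0,∞)`, the
function `k * f` is differentiable on `(0,∞)` and `(κ * D_{(k)} f)(t) = f(t)` for
all `t > 0`. -/
theorem GFD_RL_right_inverse (κ k f φ : ℝ → ℝ) (hκk : SoninPair κ k)
    (hφ : CMinusOne φ) (hfφ : ∀ t > (0:ℝ), f t = lconv κ φ t) :
    (∀ t > (0:ℝ), DifferentiableAt ℝ (lconv k f) t) ∧
      ∀ t > (0:ℝ), lconv κ (deriv (lconv k f)) t = f t := by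
  obtain ⟨hκ, hk, hs⟩ := hκk
  have hd : ∀ t > (0:ℝ), HasDerivAt (lconv k f) (φ t) t := by
    intro t ht
    have h1 : HasDerivAt (fun T => ∫ τ in (0:ℝ)..T, φ τ) (φ t) t := by
      apply intervalIntegral.integral_hasDerivAt_right
      · exact (intervalIntegrable_iff_integrableOn_Ioc_of_le ht.le).2 (cm_int hφ t ht)
      · exact (cm_cont hφ).stronglyMeasurableAtFilter isOpen_Ioi t ht
      · exact (cm_cont hφ).continuousAt (Ioi_mem_nhds ht)
    refine h1.congr_of_eventuallyEq ?_
    filter_upwards [Ioi_mem_nhds ht] with T hT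
    exact lconv_assoc_aux hk hκ hφ hs hfφ T hT
  refine ⟨fun t ht => (hd t ht).differentiableAt, fun t ht => ?_⟩
  rw [hfφ t ht, lconv_Ioo _ _ _ ht.le, lconv_Ioo _ _ _ ht.le]
  refine setIntegral_congr_fun measurableSet_Ioo fun x hx => ?_
  simp only [(hd x hx.1).deriv]
end
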